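/- Let d ≥ 1. Let Q : ℝ^d → M_d(ℝ) be a smooth compactly supported matrix-valued field and let u : ℝ^d → ℝ^d be a smooth compactly supported vector field with div u = Σ_γ ∂_γ u_γ = 0. Then ∫_{ℝ^d} Σ_{α,β,γ} u_γ (∂_γ Q_{αβ}) (ΔQ_{αβ}) dx + ∫_{ℝ^d} Σ_{α,β,γ,δ} (∂_α Q_{γδ}) (∂_β Q_{γδ}) (∂_β u_α) dx = 0. -/

import Mathlib

open MeasureTheory

/-- partial derivative in the `γ`-th coordinate direction on `ℝ^d`. -/
noncomputable def pd {d : ℕ} (γ : Fin d) (f : (Fin d → ℝ) → ℝ) (x : Fin d → ℝ) : ℝ :=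
  fderiv ℝ f x (Pi.single γ 1)

/-- componentwise Laplacian on `ℝ^d`. -/
noncomputable def lap {d : ℕ} (f : (Fin d → ℝ) → ℝ) (x : Fin d → ℝ) : ℝ :=
  ∑ γ, pd γ (pd γ f) x

theorem pd_smooth {d : ℕ} (γ : Fin d) {f : (Fin d → ℝ) → ℝ} (hf : ContDiff ℝ (⊤ : ℕ∞) f) :
    ContDiff ℝ (⊤ : ℕ∞) (pd γ f) := by
  have h : ContDiff ℝ (⊤ : ℕ∞) (fderiv ℝ f) := hf.fderiv_right (by simp)
  exact h.clm_apply contDiff_const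

theorem pd_supp {d : ℕ} (γ : Fin d) {f : (Fin d → ℝ) → ℝ} (hf : HasCompactSupport f) :
    HasCompactSupport (pd γ f) := hf.fderiv_apply ℝ _

theorem smooth_integrable {d : ℕ} {f : (Fin d → ℝ) → ℝ} (hf : ContDiff ℝ (⊤ : ℕ∞) f)
    (hs : HasCompactSupport f) : Integrable f :=
  hf.continuous.integrable_of_hasCompactSupport hs

theorem integral_pd {d : ℕ} (γ : Fin d) {f : (Fin d → ℝ) → ℝ} (hf : ContDiff ℝ (⊤ : ℕ∞) f)
    (hs : HasCompactSupport f) : ∫ x, pd γ f x = 0 := by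
  have h1 := smooth_integrable hf hs
  have h2 := smooth_integrable (pd_smooth γ hf) (pd_supp γ hs)
  have := integral_mul_fderiv_eq_neg_fderiv_mul_of_integrable (μ := volume)
    (f := fun _ : Fin d → ℝ => (1 : ℝ)) (g := f) (v := Pi.single γ 1)
    (by simp) (by simp only [one_mul]; exact h2) (by simpa using h1)
    (fun x _ => differentiableAt_const _)
    (fun x _ => (hf.differentiable (by simp)) x)
  simpa [pd] using this

theorem pd_mul {d : ℕ} (γ : Fin d) {f g : (Fin d → ℝ) → ℝ} (hf : ContDiff ℝ (⊤ : ℕ∞) f)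
    (hg : ContDiff ℝ (⊤ : ℕ∞) g) (x : Fin d → ℝ) :
    pd γ (fun y => f y * g y) x = f x * pd γ g x + pd γ f x * g x := by
  have h1 := (hf.differentiable (by simp)) x
  have h2 := (hg.differentiable (by simp)) x
  simp only [pd]
  rw [fderiv_fun_mul h1 h2]
  simp [mul_comm]

theorem pd_comm {d : ℕ} (a b : Fin d) {f : (Fin d → ℝ) → ℝ} (hf : ContDiff ℝ (⊤ : ℕ∞) f)
    (x : Fin d → ℝ) : pd a (pd b f) x = pd b (pd a f) x := by
  have h : ContDiff ℝ (⊤ : ℕ∞) (fderiv ℝ f) := hf.fderiv_right (by simp)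
  have hd := (h.differentiable (by simp)) x
  have key : ∀ v w : Fin d → ℝ,
      fderiv ℝ (fun y => fderiv ℝ f y v) x w = fderiv ℝ (fderiv ℝ f) x w v := by
    intro v w
    rw [fderiv_clm_apply hd (differentiableAt_const _)]
    simp
  have hsym : IsSymmSndFDerivAt ℝ f x :=
    ((hf.of_le (m := 2) (WithTop.coe_le_coe.2 (le_top : (2 : ℕ∞) ≤ ⊤))).contDiffAt).isSymmSndFDerivAt
      (by simp)
  change fderiv ℝ (fun y => fderiv ℝ f y _) x _ = fderiv ℝ (fun y => fderiv ℝ f y _) x _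
  rw [key, key]
  exact hsym _ _

theorem key_pt {d : ℕ} {q : (Fin d → ℝ) → ℝ} {u : (Fin d → ℝ) → Fin d → ℝ}
    (hq : ContDiff ℝ (⊤ : ℕ∞) q) (hu : ∀ a, ContDiff ℝ (⊤ : ℕ∞) (fun y => u y a))
    (hdiv : ∀ x, ∑ γ, pd γ (fun y => u y γ) x = 0) (x : Fin d → ℝ) :
    (∑ a, u x a * pd a q x * lap q x)
      + ∑ a, ∑ b, pd a q x * pd b q x * pd b (fun y => u y a) x
    = ∑ a, ∑ b, (pd b (fun y => u y a * (pd a q y * pd b q y)) x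
        - (1 / 2) * pd a (fun y => u y a * (pd b q y * pd b q y)) x) := by
  have e : ∀ a b, pd b (fun y => u y a * (pd a q y * pd b q y)) x
        - (1 / 2) * pd a (fun y => u y a * (pd b q y * pd b q y)) x
      = u x a * pd a q x * pd b (pd b q) x + pd a q x * pd b q x * pd b (fun y => u y a) x
        - pd a (fun y => u y a) x * ((1 / 2) * (pd b q x * pd b q x)) := by
    intro a b
    have ha := pd_smooth a hq
    have hb := pd_smooth b hq
    rw [pd_mul b (hu a) (ha.mul hb), pd_mul a (hu a) (hb.mul hb), pd_mul b ha hb,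
      pd_mul a hb hb, pd_comm a b hq]
    ring
  simp only [e, Finset.sum_sub_distrib, Finset.sum_add_distrib]
  have z : ∑ a, ∑ b, pd a (fun y => u y a) x * ((1 / 2) * (pd b q x * pd b q x)) = 0 := by
    simp only [← Finset.mul_sum]
    rw [← Finset.sum_mul, hdiv, zero_mul]
  rw [z, sub_zero]
  simp only [lap, Finset.mul_sum]

theorem lap_smooth {d : ℕ} {q : (Fin d → ℝ) → ℝ} (hq : ContDiff ℝ (⊤ : ℕ∞) q) :
    ContDiff ℝ (⊤ : ℕ∞) (lap q) := by
  unfold lap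
  exact ContDiff.sum fun a _ => pd_smooth a (pd_smooth a hq)

theorem int_one {d : ℕ} {q : (Fin d → ℝ) → ℝ} {u : (Fin d → ℝ) → Fin d → ℝ}
    (hq : ContDiff ℝ (⊤ : ℕ∞) q) (hu : ∀ a, ContDiff ℝ (⊤ : ℕ∞) (fun y => u y a))
    (hus : ∀ a, HasCompactSupport (fun y => u y a)) :
    Integrable (fun x => ∑ a, u x a * pd a q x * lap q x) := by
  refine integrable_finsetSum _ fun a _ => ?_
  exact smooth_integrable (((hu a).mul (pd_smooth a hq)).mul (lap_smooth hq))
    ((hus a).mul_right.mul_right)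

theorem int_two {d : ℕ} {q : (Fin d → ℝ) → ℝ} {u : (Fin d → ℝ) → Fin d → ℝ}
    (hq : ContDiff ℝ (⊤ : ℕ∞) q) (hu : ∀ a, ContDiff ℝ (⊤ : ℕ∞) (fun y => u y a))
    (hus : ∀ a, HasCompactSupport (fun y => u y a)) :
    Integrable (fun x => ∑ a, ∑ b, pd a q x * pd b q x * pd b (fun y => u y a) x) := by
  refine integrable_finsetSum _ fun a _ => integrable_finsetSum _ fun b _ => ?_
  exact smooth_integrable (((pd_smooth a hq).mul (pd_smooth b hq)).mul (pd_smooth b (hu a)))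
    ((pd_supp b (hus a)).mul_left)

theorem key_int {d : ℕ} {q : (Fin d → ℝ) → ℝ} {u : (Fin d → ℝ) → Fin d → ℝ}
    (hq : ContDiff ℝ (⊤ : ℕ∞) q) (hu : ∀ a, ContDiff ℝ (⊤ : ℕ∞) (fun y => u y a))
    (hus : ∀ a, HasCompactSupport (fun y => u y a))
    (hdiv : ∀ x, ∑ γ, pd γ (fun y => u y γ) x = 0) :
    (∫ x, ∑ a, u x a * pd a q x * lap q x)
      + ∫ x, ∑ a, ∑ b, pd a q x * pd b q x * pd b (fun y => u y a) x = 0 := by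
  rw [← integral_add (int_one hq hu hus) (int_two hq hu hus)]
  simp only [key_pt hq hu hdiv]
  have hs : ∀ a b c, ContDiff ℝ (⊤ : ℕ∞) (fun y => u y a * (pd b q y * pd c q y)) :=
    fun a b c => (hu a).mul ((pd_smooth b hq).mul (pd_smooth c hq))
  have hc : ∀ a b c, HasCompactSupport (fun y => u y a * (pd b q y * pd c q y)) :=
    fun a b c => (hus a).mul_right
  have hi : ∀ e a b c, Integrable (pd e (fun y => u y a * (pd b q y * pd c q y))) :=
    fun e a b c => smooth_integrable (pd_smooth e (hs a b c)) (pd_supp e (hc a b c))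
  have hi2 : ∀ a b, Integrable (fun x => pd b (fun y => u y a * (pd a q y * pd b q y)) x
        - (1 / 2) * pd a (fun y => u y a * (pd b q y * pd b q y)) x) :=
    fun a b => (hi b a a b).sub ((hi a a b b).const_mul _)
  rw [integral_finsetSum _ fun a _ => integrable_finsetSum _ fun b _ => hi2 a b]
  refine Finset.sum_eq_zero fun a _ => ?_
  rw [integral_finsetSum _ fun b _ => hi2 a b]
  refine Finset.sum_eq_zero fun b _ => ?_
  rw [integral_sub (hi b a a b) ((hi a a b b).const_mul _), integral_const_mul,
    integral_pd b (hs a a b) (hc a a b), integral_pd a (hs a b b) (hc a b b)]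
  simp

/-- For a smooth compactly supported matrix field `Q` on `ℝ^d` and a smooth compactly
supported divergence-free vector field `u`,
`∫ Σ_{α,β,γ} u_γ (∂_γ Q_{αβ})(ΔQ_{αβ}) dx + ∫ Σ_{α,β,γ,δ} (∂_α Q_{γδ})(∂_β Q_{γδ})(∂_β u_α) dx = 0`. -/
theorem transport_elastic_cancellation (d : ℕ) (hd : 1 ≤ d)
    (Q : (Fin d → ℝ) → Fin d → Fin d → ℝ) (u : (Fin d → ℝ) → Fin d → ℝ)
    (hQsm : ContDiff ℝ (⊤ : ℕ∞) Q) (husm : ContDiff ℝ (⊤ : ℕ∞) u)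
    (hQsupp : HasCompactSupport Q) (husupp : HasCompactSupport u)
    (hdiv : ∀ x, ∑ γ, pd γ (fun y => u y γ) x = 0) :
    (∫ x : Fin d → ℝ, ∑ α, ∑ β, ∑ γ,
        u x γ * pd γ (fun y => Q y α β) x * lap (fun y => Q y α β) x)
    + (∫ x : Fin d → ℝ, ∑ α, ∑ β, ∑ γ, ∑ δ,
        pd α (fun y => Q y γ δ) x * pd β (fun y => Q y γ δ) x
          * pd β (fun y => u y α) x) = 0 := by
  have hq : ∀ α β, ContDiff ℝ (⊤ : ℕ∞) (fun y => Q y α β) := fun α β =>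
    contDiff_pi.1 (contDiff_pi.1 hQsm α) β
  have hu : ∀ a, ContDiff ℝ (⊤ : ℕ∞) (fun y => u y a) := contDiff_pi.1 husm
  have hus : ∀ a, HasCompactSupport (fun y => u y a) := fun a =>
    husupp.comp_left (g := fun v : Fin d → ℝ => v a) rfl
  have reorder : ∀ x : Fin d → ℝ, (∑ α, ∑ β, ∑ γ, ∑ δ,
        pd α (fun y => Q y γ δ) x * pd β (fun y => Q y γ δ) x
          * pd β (fun y => u y α) x) = ∑ γ, ∑ δ, ∑ α, ∑ β,
        pd α (fun y => Q y γ δ) x * pd β (fun y => Q y γ δ) x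
          * pd β (fun y => u y α) x := by
    intro x
    calc _ = ∑ α, ∑ γ, ∑ δ, ∑ β, pd α (fun y => Q y γ δ) x * pd β (fun y => Q y γ δ) x
          * pd β (fun y => u y α) x := by
          refine Finset.sum_congr rfl fun α _ => ?_
          rw [Finset.sum_comm]
          exact Finset.sum_congr rfl fun γ _ => Finset.sum_comm
      _ = _ := by
          rw [Finset.sum_comm]
          exact Finset.sum_congr rfl fun γ _ => Finset.sum_comm
  simp only [reorder]
  rw [integral_finsetSum _ fun α _ => integrable_finsetSum _ fun β _ =>
      int_one (hq α β) hu hus,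
    integral_finsetSum _ fun α _ => integrable_finsetSum _ fun β _ =>
      int_two (hq α β) hu hus, ← Finset.sum_add_distrib]
  refine Finset.sum_eq_zero fun α _ => ?_
  rw [integral_finsetSum _ fun β _ => int_one (hq α β) hu hus,
    integral_finsetSum _ fun β _ => int_two (hq α β) hu hus, ← Finset.sum_add_distrib]
  exact Finset.sum_eq_zero fun β _ => key_int (hq α β) hu hus hdiv
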